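/- Let n ≥ 1 and let λ_1, …, λ_n > 0. For each i, let ψ_i ∈ P^r satisfy Γ_{λ_i}(ψ_i) = L(1), set e_i(t) = exp(−λ_i(t−t₀)) − ψ_i(t) and C_i = Υ(r, kλ_i) · sup_{t∈I} |e_i(t)/e_i(t₀)| + 1 with Υ(r, ϱ) = √(3/(2(2r+1)+ϱ)). Suppose a_1, …, a_n ∈ P^r and v_1, …, v_n ∈ P^r satisfy Γ_{λ_i}(v_i) = a_i for each i. Then sup_{t∈I} (Σ_{i=1}^n v_i(t)²)^{1/2} ≤ (max_{1≤i≤n} C_i) · k^{1/2} · (∫_I Σ_{i=1}^n a_i(t)² dt)^{1/2}. (This is the L∞(H)-stability of the inverse of the fully discrete parabolic dG operator, expressed in an orthonormal eigenbasis of the discrete elliptic operator with eigenvalues λ_i.) -/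

import Mathlib

open Polynomial MeasureTheory intervalIntegral

/-- The rescaled Legendre polynomials on `[t₀, t₁]`: `K i` has degree `i`,
`K i (t₁) = 1`, `K i (t₀) = (-1)^i`, and they are `L²(t₀,t₁)`-orthogonal with
`∫ K i ^ 2 = (t₁ - t₀)/(2 i + 1)`. -/
def IsLegendreBasis (t₀ t₁ : ℝ) (K : ℕ → Polynomial ℝ) : Prop :=
  (∀ i, (K i).natDegree = i) ∧ (∀ i, (K i).eval t₁ = 1) ∧
  (∀ i, (K i).eval t₀ = (-1 : ℝ) ^ i) ∧
  (∀ i j, (∫ t in t₀..t₁, (K i).eval t * (K j).eval t) =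
    if i = j then (t₁ - t₀) / (2 * (i : ℝ) + 1) else 0)

/-- The lifting operator `L(z) = (z/k) ∑_{i=0}^r (-1)^i (2i+1) K_i`. -/
noncomputable def Lop (t₀ t₁ : ℝ) (r : ℕ) (K : ℕ → Polynomial ℝ) (z : ℝ) : Polynomial ℝ :=
  Polynomial.C (z / (t₁ - t₀)) *
    ∑ i ∈ Finset.range (r + 1), Polynomial.C ((-1 : ℝ) ^ i * (2 * (i : ℝ) + 1)) * K i

/-- The endpoint lifting operator `L̂(z) = (z/k) ∑_{i=0}^r (2i+1) K_i`. -/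
noncomputable def LopE (t₀ t₁ : ℝ) (r : ℕ) (K : ℕ → Polynomial ℝ) (z : ℝ) : Polynomial ℝ :=
  Polynomial.C (z / (t₁ - t₀)) *
    ∑ i ∈ Finset.range (r + 1), Polynomial.C (2 * (i : ℝ) + 1) * K i

/-- The scalar dG operator `Γ_λ(v) = v' + L(v(t₀)) + λ v`. -/
noncomputable def Gam (t₀ t₁ : ℝ) (r : ℕ) (K : ℕ → Polynomial ℝ) (lam : ℝ)
    (v : Polynomial ℝ) : Polynomial ℝ :=
  Polynomial.derivative v + Lop t₀ t₁ r K (v.eval t₀) + Polynomial.C lam * v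

/-- The dG error function `e(t) = exp(-λ (t - t₀)) - ψ(t)`. -/
noncomputable def errF (t₀ lam : ℝ) (ψ : Polynomial ℝ) (t : ℝ) : ℝ :=
  Real.exp (-lam * (t - t₀)) - ψ.eval t

/-- `Υ(r, ϱ) = √(3 / (2 (2 r + 1) + ϱ))`. -/
noncomputable def Upsilon (r : ℕ) (ρ : ℝ) : ℝ :=
  Real.sqrt (3 / (2 * (2 * (r : ℝ) + 1) + ρ))

/-- The stability constant `C^{L²} = Υ(r, kλ) ⬝ sup_{t ∈ I} |e(t)/e(t₀)| + 1`. -/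
noncomputable def CL2 (t₀ t₁ : ℝ) (r : ℕ) (lam : ℝ) (ψ : Polynomial ℝ) : ℝ :=
  Upsilon r ((t₁ - t₀) * lam) *
    (⨆ t ∈ Set.Ioc t₀ t₁, |errF t₀ lam ψ t / errF t₀ lam ψ t₀|) + 1

/-!
Decouple into scalar problems, and let `k = t₁ - t₀` and `‖·‖` be the norm of `L²(t₀, t₁)`. For
`Γ_λ v = a`, subtracting `v(t₀) / e(t₀)` times the error function `e` cancels the lifting term,
because `(d/dt + λ) e = -e(t₀) L(1)`; what remains solves `(d/dt + λ) u = a`, `u(t₀) = 0`, and the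
Duhamel formula bounds it by `√k ‖a‖`. It remains to bound the initial value `v(t₀)`. Writing
`Γ_λ = Γ₀ + λ`, the identity `2 ⟨Γ₀ v, v⟩ = v(t₀)² + v(t₁)²` gives
`‖Γ_λ v‖² ≥ ‖Γ₀ v‖² + λ v(t₀)²`, while `⟨Γ₀ v, K_r⟩ = (-1)^r v(t₀)` and the Cauchy–Schwarz
inequality give `k ‖Γ₀ v‖² ≥ (2 r + 1) v(t₀)²`.
-/

open Set

theorem sq_integral_mul_le_of_memLp_two {α : Type*} [MeasurableSpace α] {μ : Measure α}
    {f g : α → ℝ} (hf : MemLp f 2 μ) (hg : MemLp g 2 μ) :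
    (∫ x, f x * g x ∂μ) ^ 2 ≤ (∫ x, f x ^ 2 ∂μ) * ∫ x, g x ^ 2 ∂μ := by
  have inner_toLp {φ χ : α → ℝ} (hφ : MemLp φ 2 μ) (hχ : MemLp χ 2 μ) :
      inner ℝ (hφ.toLp φ) (hχ.toLp χ) = ∫ x, φ x * χ x ∂μ := by
    rw [L2.inner_def]
    refine integral_congr_ae ?_
    filter_upwards [hφ.coeFn_toLp, hχ.coeFn_toLp] with x hx hx'
    rw [hx, hx', Real.inner_apply]
  simpa only [inner_toLp, ← pow_two] using real_inner_mul_inner_self_le (hf.toLp f) (hg.toLp g)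

theorem sq_intervalIntegral_mul_le {a b : ℝ} {f g : ℝ → ℝ} (hab : a ≤ b)
    (hf : ContinuousOn f (Icc a b)) (hg : ContinuousOn g (Icc a b)) :
    (∫ x in a..b, f x * g x) ^ 2 ≤ (∫ x in a..b, f x ^ 2) * ∫ x in a..b, g x ^ 2 := by
  have memLp {φ : ℝ → ℝ} (hφ : ContinuousOn φ (Icc a b)) :
      MemLp φ 2 (volume.restrict (Ioc a b)) :=
    (memLp_two_iff_integrable_sq
      ((hφ.mono Ioc_subset_Icc_self).aestronglyMeasurable measurableSet_Ioc)).2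
      ((hφ.pow 2).integrableOn_Icc.mono_set Ioc_subset_Icc_self)
  simpa only [integral_of_le hab] using sq_integral_mul_le_of_memLp_two (memLp hf) (memLp hg)

section Duhamel

variable {E : Type*} [NormedAddCommGroup E] [NormedSpace ℝ E] [CompleteSpace E]
  {u f : ℝ → E} {a b lam : ℝ}

theorem eq_exp_smul_add_integral_of_hasDerivAt
    (hu : ∀ s ∈ uIcc a b, HasDerivAt u (f s - lam • u s) s) (hf : ContinuousOn f (uIcc a b)) :
    u b = Real.exp (-lam * (b - a)) • u a + ∫ s in a..b, Real.exp (lam * (s - b)) • f s := by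
  have hderiv : ∀ s ∈ uIcc a b, HasDerivAt (fun s => Real.exp (lam * (s - b)) • u s)
      (Real.exp (lam * (s - b)) • f s) s := by
    intro s hs
    have hexp : HasDerivAt (fun s => Real.exp (lam * (s - b)))
        (Real.exp (lam * (s - b)) * lam) s := by
      simpa using (((hasDerivAt_id s).sub_const b).const_mul lam).exp
    refine (hexp.smul (hu s hs)).congr_deriv ?_
    module
  have hint : IntervalIntegrable (fun s => Real.exp (lam * (s - b)) • f s) volume a b :=
    ((by fun_prop : Continuous fun s => Real.exp (lam * (s - b))).continuousOn.smul
      hf).intervalIntegrable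
  rw [integral_eq_sub_of_hasDerivAt hderiv hint, sub_self, mul_zero, Real.exp_zero, one_smul,
    neg_mul_comm, neg_sub, add_sub_cancel]

theorem norm_sq_le_of_hasDerivAt_of_eq_zero (hab : a ≤ b) (hlam : 0 ≤ lam)
    (hu : ∀ s ∈ Icc a b, HasDerivAt u (f s - lam • u s) s) (hf : ContinuousOn f (Icc a b))
    (ha : u a = 0) :
    ‖u b‖ ^ 2 ≤ (b - a) * ∫ s in a..b, ‖f s‖ ^ 2 := by
  have hkernel : ∀ s ∈ Icc a b, ‖Real.exp (lam * (s - b)) • f s‖ ≤ 1 * ‖f s‖ := by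
    intro s hs
    rw [norm_smul, Real.norm_of_nonneg (Real.exp_nonneg _)]
    gcongr
    exact Real.exp_le_one_iff.2 (mul_nonpos_of_nonneg_of_nonpos hlam (sub_nonpos.2 hs.2))
  have hbound : ‖u b‖ ≤ ∫ s in a..b, 1 * ‖f s‖ := by
    rw [← uIcc_of_le hab] at hu hf
    rw [eq_exp_smul_add_integral_of_hasDerivAt hu hf, ha, smul_zero, zero_add]
    exact norm_integral_le_of_norm_le hab
      (.of_forall fun s hs => hkernel s (Ioc_subset_Icc_self hs))
      (continuousOn_const.mul hf.norm).intervalIntegrable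
  calc ‖u b‖ ^ 2 ≤ (∫ s in a..b, 1 * ‖f s‖) ^ 2 := by gcongr
    _ ≤ (∫ _ in a..b, 1 ^ 2) * ∫ s in a..b, ‖f s‖ ^ 2 :=
      sq_intervalIntegral_mul_le hab continuousOn_const hf.norm
    _ = (b - a) * ∫ s in a..b, ‖f s‖ ^ 2 := by simp

end Duhamel

theorem sqrt_sum_sq_le_iSup_mul {ι : Type*} [Fintype ι] {x y c : ι → ℝ} (hc : ∀ i, 0 ≤ c i)
    (h : ∀ i, |x i| ≤ c i * |y i|) :
    √(∑ i, x i ^ 2) ≤ (⨆ i, c i) * √(∑ i, y i ^ 2) := by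
  have hsup : 0 ≤ ⨆ i, c i := Real.iSup_nonneg hc
  refine Real.sqrt_le_iff.2 ⟨by positivity, ?_⟩
  rw [mul_pow, Real.sq_sqrt (by positivity), Finset.mul_sum]
  gcongr with i
  rw [← sq_abs, ← sq_abs (y i), ← mul_pow]
  gcongr
  exact (h i).trans (by gcongr; exact le_ciSup (finite_range c).bddAbove i)

section IntegralForm

/-- The `L²(a, b)` inner product of real polynomials, as a bilinear form. -/
noncomputable def integralForm (a b : ℝ) : LinearMap.BilinForm ℝ ℝ[X] :=
  LinearMap.mk₂ ℝ (fun p q => ∫ t in a..b, p.eval t * q.eval t)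
    (fun p p' q => by
      simp only [eval_add, add_mul]
      exact integral_add ((p.continuous.mul q.continuous).intervalIntegrable _ _)
        ((p'.continuous.mul q.continuous).intervalIntegrable _ _))
    (fun c p q => by simp only [eval_smul, smul_mul_assoc, intervalIntegral.integral_smul])
    (fun p q q' => by
      simp only [eval_add, mul_add]
      exact integral_add ((p.continuous.mul q.continuous).intervalIntegrable _ _)
        ((p.continuous.mul q'.continuous).intervalIntegrable _ _))
    (fun c p q => by simp only [eval_smul, mul_smul_comm, intervalIntegral.integral_smul])

variable {a b : ℝ}

lemma integralForm_apply (p q : ℝ[X]) :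
    integralForm a b p q = ∫ t in a..b, p.eval t * q.eval t := rfl

lemma integralForm_self (p : ℝ[X]) : integralForm a b p p = ∫ t in a..b, p.eval t ^ 2 := by
  simp only [integralForm_apply, pow_two]

lemma integralForm_comm (p q : ℝ[X]) : integralForm a b p q = integralForm a b q p := by
  simp only [integralForm_apply, mul_comm]

lemma integralForm_self_nonneg (hab : a ≤ b) (p : ℝ[X]) : 0 ≤ integralForm a b p p :=
  integral_nonneg hab fun _ _ => mul_self_nonneg _

lemma integralForm_sq_le (hab : a ≤ b) (p q : ℝ[X]) :
    integralForm a b p q ^ 2 ≤ integralForm a b p p * integralForm a b q q := by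
  simpa only [integralForm_apply, ← pow_two] using
    sq_intervalIntegral_mul_le hab p.continuous.continuousOn q.continuous.continuousOn

lemma integralForm_derivative_add (p q : ℝ[X]) :
    integralForm a b (derivative p) q + integralForm a b p (derivative q) =
      p.eval b * q.eval b - p.eval a * q.eval a := by
  have hint (p q : ℝ[X]) : IntervalIntegrable (fun t => p.eval t * q.eval t) volume a b :=
    (p.continuous.mul q.continuous).intervalIntegrable _ _
  rw [integralForm_apply, integralForm_apply, ← integral_add (hint _ _) (hint _ _)]
  exact integral_deriv_mul_eq_sub (fun t _ => p.hasDerivAt t) (fun t _ => q.hasDerivAt t)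
    ((derivative p).continuous.intervalIntegrable _ _)
    ((derivative q).continuous.intervalIntegrable _ _)

end IntegralForm

section Polynomial

variable {R : Type*} [Semiring R] {p : R[X]} {r : ℕ}

lemma derivative_mem_degreeLT_of_natDegree_le (hp : p.natDegree ≤ r) :
    derivative p ∈ degreeLT R r := by
  rw [mem_degreeLT]
  rcases eq_or_ne p 0 with rfl | hp₀
  · simp
  · exact (degree_derivative_lt hp₀).trans_le (degree_le_of_natDegree_le hp)

lemma mem_degreeLT_succ_of_natDegree_le (hp : p.natDegree ≤ r) : p ∈ degreeLT R (r + 1) :=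
  mem_degreeLT.2 ((degree_le_of_natDegree_le hp).trans_lt (mod_cast r.lt_succ_self))

lemma eq_zero_of_derivative_eq_C_mul [NoZeroDivisors R] {c : R} (hc : c ≠ 0)
    (hp : derivative p = C c * p) : p = 0 := by
  by_contra hp₀
  have hdeg := degree_derivative_lt hp₀
  rw [hp, degree_C_mul hc] at hdeg
  exact hdeg.false

end Polynomial

section DiscontinuousGalerkin

variable {t₀ t₁ lam : ℝ} {r : ℕ} {K : ℕ → ℝ[X]} {v ψ : ℝ[X]}

namespace IsLegendreBasis

lemma natDegree_eq (hK : IsLegendreBasis t₀ t₁ K) (i : ℕ) : (K i).natDegree = i :=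
  hK.1 i

lemma ne_zero (hK : IsLegendreBasis t₀ t₁ K) (i : ℕ) : K i ≠ 0 :=
  fun h => by simpa [h] using hK.2.1 i

lemma eval_left (hK : IsLegendreBasis t₀ t₁ K) (i : ℕ) : (K i).eval t₀ = (-1) ^ i :=
  hK.2.2.1 i

lemma integralForm_eq (hK : IsLegendreBasis t₀ t₁ K) (i j : ℕ) :
    integralForm t₀ t₁ (K i) (K j) = if i = j then (t₁ - t₀) / (2 * i + 1) else 0 :=
  hK.2.2.2 i j

theorem span_eq_degreeLT (hK : IsLegendreBasis t₀ t₁ K) (m : ℕ) :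
    Submodule.span ℝ (K '' Iio m) = degreeLT ℝ m :=
  let S : Polynomial.Sequence ℝ :=
    ⟨K, fun i => by rw [degree_eq_natDegree (hK.ne_zero i), hK.natDegree_eq i]⟩
  S.span_degreeLT fun i _ => (leadingCoeff_ne_zero.2 (hK.ne_zero i)).isUnit

theorem eqOn_degreeLT (hK : IsLegendreBasis t₀ t₁ K) {M : Type*} [AddCommMonoid M] [Module ℝ M]
    {f g : ℝ[X] →ₗ[ℝ] M} {m : ℕ} (h : ∀ i < m, f (K i) = g (K i)) :
    EqOn f g (degreeLT ℝ m) := by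
  rw [← hK.span_eq_degreeLT]
  exact LinearMap.eqOn_span (forall_mem_image.2 h)

theorem integralForm_eq_zero (hK : IsLegendreBasis t₀ t₁ K) {m : ℕ} {p : ℝ[X]}
    (hp : p ∈ degreeLT ℝ m) : integralForm t₀ t₁ p (K m) = 0 :=
  hK.eqOn_degreeLT (f := (integralForm t₀ t₁).flip (K m)) (g := 0)
    (fun i hi => (hK.integralForm_eq i m).trans (if_neg hi.ne)) hp

theorem integralForm_Lop (hK : IsLegendreBasis t₀ t₁ K) (ht : t₀ < t₁) (z : ℝ) {p : ℝ[X]}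
    (hp : p.natDegree ≤ r) : integralForm t₀ t₁ p (Lop t₀ t₁ r K z) = z * p.eval t₀ := by
  refine hK.eqOn_degreeLT (f := (integralForm t₀ t₁).flip (Lop t₀ t₁ r K z))
    (g := z • leval t₀) (fun i hi => ?_) (mem_degreeLT_succ_of_natDegree_le hp)
  have hk : t₁ - t₀ ≠ 0 := (sub_pos.2 ht).ne'
  have hi' : (2 * i + 1 : ℝ) ≠ 0 := by positivity
  change integralForm t₀ t₁ (K i) (Lop t₀ t₁ r K z) = z * (K i).eval t₀
  simp only [Lop, ← smul_eq_C_mul, map_smul, map_sum, hK.integralForm_eq, hK.eval_left,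
    smul_eq_mul, mul_ite, mul_zero, Finset.sum_ite_eq, Finset.mem_range, hi, if_true]
  field_simp

end IsLegendreBasis

lemma Lop_eq_smul (z : ℝ) : Lop t₀ t₁ r K z = z • Lop t₀ t₁ r K 1 := by
  rw [Lop, Lop, smul_eq_C_mul, ← mul_assoc, ← C_mul, mul_one_div]

lemma Gam_eq_Gam_zero_add_smul (lam : ℝ) (v : ℝ[X]) :
    Gam t₀ t₁ r K lam v = Gam t₀ t₁ r K 0 v + lam • v := by
  simp only [Gam, smul_eq_C_mul, C_0, zero_mul, add_zero]

lemma Upsilon_nonneg (r : ℕ) (ρ : ℝ) : 0 ≤ Upsilon r ρ := Real.sqrt_nonneg _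

lemma one_le_mul_Upsilon_sq (r : ℕ) {ρ : ℝ} (hρ : 0 ≤ ρ) :
    1 ≤ (2 * r + 1 + ρ) * Upsilon r ρ ^ 2 := by
  rw [Upsilon, Real.sq_sqrt (by positivity), ← mul_div_assoc, one_le_div (by positivity)]
  linarith

namespace IsLegendreBasis

theorem two_mul_integralForm_Gam_zero_self (hK : IsLegendreBasis t₀ t₁ K) (ht : t₀ < t₁)
    (hv : v.natDegree ≤ r) :
    2 * integralForm t₀ t₁ (Gam t₀ t₁ r K 0 v) v = v.eval t₁ ^ 2 + v.eval t₀ ^ 2 := by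
  have hparts := integralForm_derivative_add (a := t₀) (b := t₁) v v
  have hlift := hK.integralForm_Lop ht (v.eval t₀) hv
  rw [integralForm_comm] at hlift
  rw [integralForm_comm v] at hparts
  simp only [Gam, C_0, zero_mul, add_zero, map_add, LinearMap.add_apply]
  linear_combination hparts + 2 * hlift

theorem integralForm_Gam_self (hK : IsLegendreBasis t₀ t₁ K) (ht : t₀ < t₁) (lam : ℝ)
    (hv : v.natDegree ≤ r) :
    integralForm t₀ t₁ (Gam t₀ t₁ r K lam v) (Gam t₀ t₁ r K lam v) =
      integralForm t₀ t₁ (Gam t₀ t₁ r K 0 v) (Gam t₀ t₁ r K 0 v) +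
        lam * (v.eval t₁ ^ 2 + v.eval t₀ ^ 2) + lam ^ 2 * integralForm t₀ t₁ v v := by
  rw [← hK.two_mul_integralForm_Gam_zero_self ht hv, Gam_eq_Gam_zero_add_smul]
  simp only [map_add, map_smul, LinearMap.add_apply, LinearMap.smul_apply, smul_eq_mul,
    integralForm_comm v]
  ring

theorem integralForm_Gam_zero_top (hK : IsLegendreBasis t₀ t₁ K) (ht : t₀ < t₁)
    (hv : v.natDegree ≤ r) :
    integralForm t₀ t₁ (Gam t₀ t₁ r K 0 v) (K r) = v.eval t₀ * (-1) ^ r := by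
  simp only [Gam, C_0, zero_mul, add_zero, map_add, LinearMap.add_apply]
  rw [hK.integralForm_eq_zero (derivative_mem_degreeLT_of_natDegree_le hv), zero_add,
    integralForm_comm, hK.integralForm_Lop ht _ (hK.natDegree_eq r).le, hK.eval_left]

theorem mul_eval_left_sq_le_integralForm_Gam_zero (hK : IsLegendreBasis t₀ t₁ K) (ht : t₀ < t₁)
    (hv : v.natDegree ≤ r) :
    (2 * r + 1) * v.eval t₀ ^ 2 ≤
      (t₁ - t₀) * integralForm t₀ t₁ (Gam t₀ t₁ r K 0 v) (Gam t₀ t₁ r K 0 v) := by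
  have hcs := integralForm_sq_le ht.le (Gam t₀ t₁ r K 0 v) (K r)
  rw [hK.integralForm_Gam_zero_top ht hv, hK.integralForm_eq, if_pos rfl, mul_pow, ← pow_mul,
    mul_comm r, Even.neg_one_pow (even_two_mul r), mul_one, ← mul_div_assoc,
    le_div_iff₀ (by positivity)] at hcs
  linarith

theorem mul_eval_left_sq_le_integralForm_Gam (hK : IsLegendreBasis t₀ t₁ K) (ht : t₀ < t₁)
    (hlam : 0 ≤ lam) (hv : v.natDegree ≤ r) :
    (2 * r + 1 + (t₁ - t₀) * lam) * v.eval t₀ ^ 2 ≤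
      (t₁ - t₀) * integralForm t₀ t₁ (Gam t₀ t₁ r K lam v) (Gam t₀ t₁ r K lam v) := by
  have hk : 0 ≤ t₁ - t₀ := sub_nonneg.2 ht.le
  have hzero := hK.mul_eval_left_sq_le_integralForm_Gam_zero ht hv
  have hright : 0 ≤ (t₁ - t₀) * (lam * v.eval t₁ ^ 2) := by positivity
  have hself : 0 ≤ (t₁ - t₀) * (lam ^ 2 * integralForm t₀ t₁ v v) :=
    mul_nonneg hk (mul_nonneg (sq_nonneg lam) (integralForm_self_nonneg ht.le v))
  rw [hK.integralForm_Gam_self ht lam hv]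
  linarith

theorem abs_eval_left_le (hK : IsLegendreBasis t₀ t₁ K) (ht : t₀ < t₁) (hlam : 0 ≤ lam)
    (hv : v.natDegree ≤ r) :
    |v.eval t₀| ≤ Upsilon r ((t₁ - t₀) * lam) *
      √((t₁ - t₀) * ∫ s in t₀..t₁, (Gam t₀ t₁ r K lam v).eval s ^ 2) := by
  set ρ := (t₁ - t₀) * lam
  have hρ : 0 ≤ ρ := mul_nonneg (sub_nonneg.2 ht.le) hlam
  have hsq : v.eval t₀ ^ 2 ≤ Upsilon r ρ ^ 2 *
      ((t₁ - t₀) * ∫ s in t₀..t₁, (Gam t₀ t₁ r K lam v).eval s ^ 2) :=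
    calc v.eval t₀ ^ 2
      _ ≤ (2 * r + 1 + ρ) * Upsilon r ρ ^ 2 * v.eval t₀ ^ 2 :=
        le_mul_of_one_le_left (sq_nonneg _) (one_le_mul_Upsilon_sq r hρ)
      _ = Upsilon r ρ ^ 2 * ((2 * r + 1 + ρ) * v.eval t₀ ^ 2) := by ring
      _ ≤ _ := by
        rw [← integralForm_self]
        exact mul_le_mul_of_nonneg_left (hK.mul_eval_left_sq_le_integralForm_Gam ht hlam hv)
          (sq_nonneg _)
  have habs := Real.abs_le_sqrt hsq
  rwa [Real.sqrt_mul (sq_nonneg _), Real.sqrt_sq (Upsilon_nonneg r ρ)] at habs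

end IsLegendreBasis

lemma errF_left (ψ : ℝ[X]) : errF t₀ lam ψ t₀ = 1 - ψ.eval t₀ := by simp [errF]

lemma errF_left_ne_zero (hlam : lam ≠ 0) (hψ : Gam t₀ t₁ r K lam ψ = Lop t₀ t₁ r K 1) :
    errF t₀ lam ψ t₀ ≠ 0 := by
  intro h
  have hψ₀ : ψ.eval t₀ = 1 := by linarith [errF_left (t₀ := t₀) (lam := lam) ψ]
  have hode : derivative ψ = C (-lam) * ψ := by
    rw [Gam, hψ₀] at hψ
    rw [C_neg]
    linear_combination hψ
  simp [eq_zero_of_derivative_eq_C_mul (neg_ne_zero.2 hlam) hode] at hψ₀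

lemma hasDerivAt_errF (hψ : Gam t₀ t₁ r K lam ψ = Lop t₀ t₁ r K 1) (s : ℝ) :
    HasDerivAt (errF t₀ lam ψ)
      (-errF t₀ lam ψ t₀ * (Lop t₀ t₁ r K 1).eval s - lam * errF t₀ lam ψ s) s := by
  have hexp : HasDerivAt (fun s => Real.exp (-lam * (s - t₀)))
      (Real.exp (-lam * (s - t₀)) * -lam) s := by
    simpa using (((hasDerivAt_id s).sub_const t₀).const_mul (-lam)).exp
  refine (hexp.sub (ψ.hasDerivAt s)).congr_deriv ?_
  have heval := congrArg (eval s) hψ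
  rw [Gam, Lop_eq_smul (ψ.eval t₀)] at heval
  simp only [eval_add, eval_mul, eval_C, eval_smul, smul_eq_mul] at heval
  rw [errF_left, errF]
  linear_combination -heval

lemma hasDerivAt_eval_sub_mul_errF_div (hlam : lam ≠ 0)
    (hψ : Gam t₀ t₁ r K lam ψ = Lop t₀ t₁ r K 1) (v : ℝ[X]) (s : ℝ) :
    HasDerivAt (fun s => v.eval s - v.eval t₀ * (errF t₀ lam ψ s / errF t₀ lam ψ t₀))
      ((Gam t₀ t₁ r K lam v).eval s -
        lam • (v.eval s - v.eval t₀ * (errF t₀ lam ψ s / errF t₀ lam ψ t₀))) s := by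
  have he := errF_left_ne_zero hlam hψ
  refine ((v.hasDerivAt s).sub
    (((hasDerivAt_errF hψ s).div_const _).const_mul (v.eval t₀))).congr_deriv ?_
  rw [Gam, Lop_eq_smul (v.eval t₀)]
  simp only [eval_add, eval_mul, eval_C, eval_smul, smul_eq_mul]
  field_simp
  ring

theorem abs_eval_sub_mul_errF_div_le (hlam : 0 < lam)
    (hψ : Gam t₀ t₁ r K lam ψ = Lop t₀ t₁ r K 1) (v : ℝ[X]) {t : ℝ} (ht : t ∈ Icc t₀ t₁) :
    |v.eval t - v.eval t₀ * (errF t₀ lam ψ t / errF t₀ lam ψ t₀)| ≤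
      √((t₁ - t₀) * ∫ s in t₀..t₁, (Gam t₀ t₁ r K lam v).eval s ^ 2) := by
  have hcont := (Gam t₀ t₁ r K lam v).continuous
  have hduhamel := norm_sq_le_of_hasDerivAt_of_eq_zero ht.1 hlam.le
    (fun s _ => hasDerivAt_eval_sub_mul_errF_div hlam.ne' hψ v s) hcont.continuousOn
    (by rw [div_self (errF_left_ne_zero hlam.ne' hψ), mul_one, sub_self])
  simp only [Real.norm_eq_abs, sq_abs] at hduhamel
  refine Real.abs_le_sqrt (hduhamel.trans ?_)
  gcongr
  · exact integral_nonneg ht.1 fun _ _ => sq_nonneg _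
  · exact sub_nonneg.2 (ht.1.trans ht.2)
  · exact ht.2
  · exact integral_mono_interval le_rfl ht.1 ht.2 (.of_forall fun _ => sq_nonneg _)
      ((hcont.pow 2).intervalIntegrable _ _)

lemma abs_errF_div_le_iSup (lam : ℝ) (ψ : ℝ[X]) {t : ℝ} (ht : t ∈ Ioc t₀ t₁) :
    |errF t₀ lam ψ t / errF t₀ lam ψ t₀| ≤
      ⨆ s ∈ Ioc t₀ t₁, |errF t₀ lam ψ s / errF t₀ lam ψ t₀| := by
  have hcont : Continuous fun s => |errF t₀ lam ψ s / errF t₀ lam ψ t₀| := by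
    have := ψ.continuous
    unfold errF
    fun_prop
  refine le_ciSup₂ (f := fun s (_ : s ∈ Ioc t₀ t₁) => |errF t₀ lam ψ s / errF t₀ lam ψ t₀|)
    (((isCompact_Icc (a := t₀) (b := t₁)).bddAbove_image hcont.continuousOn).mono ?_) t ht
  rintro _ ⟨_, ⟨s, rfl⟩, ⟨hs, rfl⟩⟩
  exact ⟨s, Ioc_subset_Icc_self hs, rfl⟩

lemma CL2_nonneg (t₀ t₁ : ℝ) (r : ℕ) (lam : ℝ) (ψ : ℝ[X]) : 0 ≤ CL2 t₀ t₁ r lam ψ :=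
  add_nonneg (mul_nonneg (Upsilon_nonneg _ _)
    (Real.iSup_nonneg fun _ => Real.iSup_nonneg fun _ => abs_nonneg _)) zero_le_one

theorem IsLegendreBasis.abs_eval_le (hK : IsLegendreBasis t₀ t₁ K) (hlam : 0 < lam)
    (hψ : Gam t₀ t₁ r K lam ψ = Lop t₀ t₁ r K 1) (hv : v.natDegree ≤ r) {t : ℝ}
    (ht : t ∈ Ioc t₀ t₁) :
    |v.eval t| ≤ CL2 t₀ t₁ r lam ψ *
      √((t₁ - t₀) * ∫ s in t₀..t₁, (Gam t₀ t₁ r K lam v).eval s ^ 2) := by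
  set N := √((t₁ - t₀) * ∫ s in t₀..t₁, (Gam t₀ t₁ r K lam v).eval s ^ 2)
  set q := errF t₀ lam ψ t / errF t₀ lam ψ t₀
  set S := ⨆ s ∈ Ioc t₀ t₁, |errF t₀ lam ψ s / errF t₀ lam ψ t₀|
  have hleft : |v.eval t₀| ≤ Upsilon r ((t₁ - t₀) * lam) * N :=
    hK.abs_eval_left_le (ht.1.trans_le ht.2) hlam.le hv
  have hq : |q| ≤ S := abs_errF_div_le_iSup lam ψ ht
  calc |v.eval t| ≤ |v.eval t₀ * q| + |v.eval t - v.eval t₀ * q| := by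
        simpa using abs_add_le (v.eval t₀ * q) (v.eval t - v.eval t₀ * q)
    _ = |v.eval t₀| * |q| + |v.eval t - v.eval t₀ * q| := by rw [abs_mul]
    _ ≤ Upsilon r ((t₁ - t₀) * lam) * N * S + N := by
        gcongr
        · exact (abs_nonneg _).trans hleft
        · exact abs_eval_sub_mul_errF_div_le hlam hψ v (Ioc_subset_Icc_self ht)
    _ = CL2 t₀ t₁ r lam ψ * N := by rw [CL2]; ring

end DiscontinuousGalerkin

/-- `L^∞(H)`-stability of the inverse of the fully discrete parabolic dG operator, in an
orthonormal eigenbasis of the discrete elliptic operator with eigenvalues `λ_1, …, λ_n`. -/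
theorem stmt_18 (t₀ t₁ : ℝ) (ht : t₀ < t₁) (r : ℕ) (K : ℕ → Polynomial ℝ)
    (hK : IsLegendreBasis t₀ t₁ K) (n : ℕ) (hn : 1 ≤ n)
    (lam : Fin n → ℝ) (hlam : ∀ i, 0 < lam i)
    (ψ : Fin n → Polynomial ℝ) (hψdeg : ∀ i, (ψ i).natDegree ≤ r)
    (hψ : ∀ i, Gam t₀ t₁ r K (lam i) (ψ i) = Lop t₀ t₁ r K 1)
    (a v : Fin n → Polynomial ℝ)
    (ha : ∀ i, (a i).natDegree ≤ r) (hvdeg : ∀ i, (v i).natDegree ≤ r)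
    (hΓ : ∀ i, Gam t₀ t₁ r K (lam i) (v i) = a i) :
    ∀ t ∈ Set.Ioc t₀ t₁,
      Real.sqrt (∑ i, ((v i).eval t) ^ 2) ≤
        (⨆ i, CL2 t₀ t₁ r (lam i) (ψ i)) * Real.sqrt (t₁ - t₀) *
          Real.sqrt (∫ s in t₀..t₁, ∑ i, ((a i).eval s) ^ 2) := by
  intro t htI
  have hk : 0 ≤ t₁ - t₀ := sub_nonneg.2 ht.le
  have ha₂ (i : Fin n) : 0 ≤ (t₁ - t₀) * ∫ s in t₀..t₁, (a i).eval s ^ 2 :=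
    mul_nonneg hk (integral_nonneg ht.le fun _ _ => sq_nonneg _)
  have hscalar (i : Fin n) : |(v i).eval t| ≤ CL2 t₀ t₁ r (lam i) (ψ i) *
      |√((t₁ - t₀) * ∫ s in t₀..t₁, (a i).eval s ^ 2)| := by
    rw [abs_of_nonneg (Real.sqrt_nonneg _), ← hΓ i]
    exact hK.abs_eval_le (hlam i) (hψ i) (hvdeg i) htI
  have hsum := sqrt_sum_sq_le_iSup_mul (fun i => CL2_nonneg t₀ t₁ r (lam i) (ψ i)) hscalar
  simp only [Real.sq_sqrt (ha₂ _)] at hsum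
  have hintegral : ∫ s in t₀..t₁, ∑ i, (a i).eval s ^ 2 = ∑ i, ∫ s in t₀..t₁, (a i).eval s ^ 2 :=
    intervalIntegral.integral_finsetSum fun i _ =>
      ((a i).continuous.pow 2).intervalIntegrable _ _
  rwa [← Finset.mul_sum, ← hintegral, Real.sqrt_mul hk, ← mul_assoc] at hsum
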